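/- For every δ > 0 there exists ε with 0 < ε < δ such that D_ε is a good joint probability matrix. -/

import Mathlib

open scoped BigOperators Classical

noncomputable section

/-- Probability of an event `E` under a distribution `μ` on a finite sample space `Ω`. -/
def pr {Ω : Type} [Fintype Ω] (μ : Ω → ℝ) (E : Ω → Prop) : ℝ :=
  ∑ ω, if E ω then μ ω else 0

/-- `μ` is a probability distribution on the finite space `Ω`. -/
def IsProb {Ω : Type} [Fintype Ω] (μ : Ω → ℝ) : Prop :=
  (∀ ω, 0 ≤ μ ω) ∧ ∑ ω, μ ω = 1

/-- Shannon entropy (base 2) of a random variable `α` on a finite probability space. -/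
def ent {Ω A : Type} [Fintype Ω] (μ : Ω → ℝ) (α : Ω → A) : ℝ :=
  -∑ a ∈ Finset.univ.image α,
      pr μ (fun ω => α ω = a) * Real.logb 2 (pr μ (fun ω => α ω = a))

/-- Conditional entropy `H(α | β)`. -/
def condEnt {Ω A B : Type} [Fintype Ω] (μ : Ω → ℝ) (α : Ω → A) (β : Ω → B) : ℝ :=
  ent μ (fun ω => (α ω, β ω)) - ent μ β

/-- Mutual information `I(α : β)`. -/
def mutualInfo {Ω A B : Type} [Fintype Ω] (μ : Ω → ℝ) (α : Ω → A) (β : Ω → B) : ℝ :=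
  ent μ α + ent μ β - ent μ (fun ω => (α ω, β ω))

/-- Conditional mutual information `I(α : β | γ)`. -/
def condMutualInfo {Ω A B C : Type} [Fintype Ω] (μ : Ω → ℝ)
    (α : Ω → A) (β : Ω → B) (γ : Ω → C) : ℝ :=
  condEnt μ α γ + condEnt μ β γ - condEnt μ (fun ω => (α ω, β ω)) γ

/-- Independence of two random variables. -/
def Indep {Ω A B : Type} [Fintype Ω] (μ : Ω → ℝ) (α : Ω → A) (β : Ω → B) : Prop :=
  ∀ (a : A) (b : B),
    pr μ (fun ω => α ω = a ∧ β ω = b) =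
      pr μ (fun ω => α ω = a) * pr μ (fun ω => β ω = b)

/-- Auxiliary form of "conditionally independent of order `k`" (explicit `Fintype`):
`α` and `β` are conditionally independent of order `0` if they are independent,
and of order `k + 1` if on some finite probability space there are random variables
`α₀, β₀, α*, β*` such that `(α₀, β₀)` has the same joint distribution as `(α, β)`,
`I(α₀ : β₀ | α*) = 0`, `I(α₀ : β₀ | β*) = 0`, and `α*, β*` are conditionally
independent of order `k`. -/
def CondIndepOrderAux : ℕ → (Ω A B : Type) → Fintype Ω → (Ω → ℝ) → (Ω → A) → (Ω → B) → Prop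
  | 0, _Ω, _A, _B, iΩ, μ, α, β => @Indep _ _ _ iΩ μ α β
  | k+1, _Ω, A, B, iΩ, μ, α, β =>
      ∃ (Ω' A' B' : Type) (iΩ' : Fintype Ω') (μ' : Ω' → ℝ)
        (α₀ : Ω' → A) (β₀ : Ω' → B) (αs : Ω' → A') (βs : Ω' → B'),
        @IsProb _ iΩ' μ' ∧
        (∀ (a : A) (b : B),
          @pr _ iΩ' μ' (fun ω => α₀ ω = a ∧ β₀ ω = b) =
            @pr _ iΩ μ (fun ω => α ω = a ∧ β ω = b)) ∧
        @condMutualInfo _ _ _ _ iΩ' μ' α₀ β₀ αs = 0 ∧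
        @condMutualInfo _ _ _ _ iΩ' μ' α₀ β₀ βs = 0 ∧
        CondIndepOrderAux k Ω' A' B' iΩ' μ' αs βs

/-- Random variables `α` and `β` on a finite probability space are
conditionally independent of order `k`. -/
def CondIndepOrder {Ω A B : Type} [iΩ : Fintype Ω]
    (μ : Ω → ℝ) (α : Ω → A) (β : Ω → B) (k : ℕ) : Prop :=
  CondIndepOrderAux k Ω A B iΩ μ α β

/-- An `m × n` joint probability matrix: nonnegative entries summing to `1`. -/
def IsJointProbMatrix {m n : ℕ} (M : Matrix (Fin m) (Fin n) ℝ) : Prop :=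
  (∀ i j, 0 ≤ M i j) ∧ ∑ i, ∑ j, M i j = 1

/-- `M` is the joint probability matrix of the pair `(α, β)`. -/
def IsJointMatrixOf {Ω : Type} [Fintype Ω] {m n : ℕ} (M : Matrix (Fin m) (Fin n) ℝ)
    (μ : Ω → ℝ) (α : Ω → Fin m) (β : Ω → Fin n) : Prop :=
  ∀ i j, M i j = pr μ (fun ω => α ω = i ∧ β ω = j)

/-- `M` is a block matrix: rows and columns can be partitioned into two nonempty
parts so that the two diagonal blocks each contain a nonzero element and all
entries outside the diagonal blocks vanish. -/
def IsBlockMatrix {m n : ℕ} (M : Matrix (Fin m) (Fin n) ℝ) : Prop :=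
  ∃ (I₁ : Finset (Fin m)) (J₁ : Finset (Fin n)),
    I₁.Nonempty ∧ I₁ᶜ.Nonempty ∧ J₁.Nonempty ∧ J₁ᶜ.Nonempty ∧
    (∃ i ∈ I₁, ∃ j ∈ J₁, M i j ≠ 0) ∧
    (∃ i ∈ I₁ᶜ, ∃ j ∈ J₁ᶜ, M i j ≠ 0) ∧
    (∀ i j, ((i ∈ I₁ ∧ j ∈ J₁ᶜ) ∨ (i ∈ I₁ᶜ ∧ j ∈ J₁)) → M i j = 0)

/-- `M` is a good matrix: the joint probability matrix of some pair of
conditionally independent random variables (of some finite order). -/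
def IsGoodMatrix {m n : ℕ} (M : Matrix (Fin m) (Fin n) ℝ) : Prop :=
  ∃ (Ω : Type) (iΩ : Fintype Ω) (μ : Ω → ℝ) (α : Ω → Fin m) (β : Ω → Fin n) (k : ℕ),
    @IsProb _ iΩ μ ∧ @IsJointMatrixOf _ iΩ _ _ M μ α β ∧
    @CondIndepOrder _ _ _ iΩ μ α β k

/-- A stochastic matrix: nonnegative entries, all row sums equal to `1`. -/
def IsStochastic {m n : ℕ} (A : Matrix (Fin m) (Fin n) ℝ) : Prop :=
  (∀ i j, 0 ≤ A i j) ∧ ∀ i, ∑ j, A i j = 1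

/-- The matrix `D_ε`: diagonal entries `1/2 - ε`, off-diagonal entries `ε`. -/
def Dmat (ε : ℝ) : Matrix (Fin 2) (Fin 2) ℝ :=
  fun i j => if i = j then 1/2 - ε else ε

/-- The distribution of `n` i.i.d. trials, each distributed according to `μ`. -/
def iidMeasure {Ω : Type} [Fintype Ω] (μ : Ω → ℝ) (n : ℕ) : (Fin n → Ω) → ℝ :=
  fun ωv => ∏ i, μ (ωv i)

/-- The sequence of `n` coordinatewise copies of a random variable. -/
def iidRV {Ω A : Type} (α : Ω → A) (n : ℕ) : (Fin n → Ω) → (Fin n → A) :=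
  fun ωv i => α (ωv i)

/-- `(u, v, w)` belongs to the rate region of the pair `(α, β)`. -/
def InRateRegion {Ω A B : Type} [Fintype Ω] (μ : Ω → ℝ) (α : Ω → A) (β : Ω → B)
    (u v w : ℝ) : Prop :=
  0 ≤ u ∧ 0 ≤ v ∧ 0 ≤ w ∧
  ∀ ε > (0:ℝ), ∀ δ > (0:ℝ), ∃ n₀ : ℕ, ∀ n ≥ n₀,
    ∃ (t : (Fin n → A) × (Fin n → B) → (Fin ⌊(u + δ) * n⌋₊ → Bool))
      (f : (Fin n → A) × (Fin n → B) → (Fin ⌊(v + δ) * n⌋₊ → Bool))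
      (g : (Fin n → A) × (Fin n → B) → (Fin ⌊(w + δ) * n⌋₊ → Bool))
      (r : (Fin ⌊(u + δ) * n⌋₊ → Bool) × (Fin ⌊(v + δ) * n⌋₊ → Bool) → (Fin n → A))
      (s : (Fin ⌊(u + δ) * n⌋₊ → Bool) × (Fin ⌊(w + δ) * n⌋₊ → Bool) → (Fin n → B)),
      pr (iidMeasure μ n) (fun ωv =>
          r (t (iidRV α n ωv, iidRV β n ωv), f (iidRV α n ωv, iidRV β n ωv)) = iidRV α n ωv)
        > 1 - ε ∧
      pr (iidMeasure μ n) (fun ωv =>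
          s (t (iidRV α n ωv, iidRV β n ωv), g (iidRV α n ωv, iidRV β n ωv)) = iidRV β n ωv)
        > 1 - ε

/-- The support of a matrix: the set of positions of its nonzero entries. -/
def msupport {m n : ℕ} (M : Matrix (Fin m) (Fin n) ℝ) : Set (Fin m × Fin n) :=
  {p | M p.1 p.2 ≠ 0}

/-- An r-matrix: nonnegative entries and rectangular support. -/
def IsRMatrix {m n : ℕ} (M : Matrix (Fin m) (Fin n) ℝ) : Prop :=
  (∀ i j, 0 ≤ M i j) ∧ ∃ (A : Set (Fin m)) (B : Set (Fin n)), msupport M = A ×ˢ B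

/-- An r-decomposition of `M`: an expression of `M` as a finite sum of r-matrices
such that the supports of consecutive summands intersect. -/
def IsRDecomposition {m n : ℕ} (M : Matrix (Fin m) (Fin n) ℝ)
    (l : ℕ) (Ms : Fin l → Matrix (Fin m) (Fin n) ℝ) : Prop :=
  M = ∑ i, Ms i ∧ (∀ i, IsRMatrix (Ms i)) ∧
  ∀ (i : ℕ) (h : i + 1 < l),
    (msupport (Ms ⟨i, Nat.lt_of_succ_lt h⟩) ∩ msupport (Ms ⟨i + 1, h⟩)).Nonempty

end

theorem ent_eq_sum {Ω A : Type} [Fintype Ω] (μ : Ω → ℝ) (α : Ω → A) :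
    ent μ α = -∑ ω, μ ω * Real.logb 2 (pr μ (fun ω' => α ω' = α ω)) := by
  unfold ent
  congr 1
  have h : ∀ a ∈ Finset.univ.image α,
      pr μ (fun ω => α ω = a) * Real.logb 2 (pr μ (fun ω => α ω = a)) =
      ∑ ω ∈ Finset.univ with α ω = a, μ ω * Real.logb 2 (pr μ (fun ω' => α ω' = α ω)) := by
    intro a _
    have h2 : pr μ (fun ω => α ω = a) = ∑ ω ∈ Finset.univ with α ω = a, μ ω := by
      unfold pr
      rw [Finset.sum_filter]
    conv_lhs => rw [show pr μ (fun ω => α ω = a) * Real.logb 2 (pr μ (fun ω => α ω = a)) =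
      (∑ ω ∈ Finset.univ with α ω = a, μ ω) * Real.logb 2 (pr μ (fun ω => α ω = a)) by rw [← h2]]
    rw [Finset.sum_mul]
    apply Finset.sum_congr rfl
    intro ω hω
    rw [(Finset.mem_filter.mp hω).2]
  rw [Finset.sum_congr rfl h]
  exact Finset.sum_fiberwise_of_maps_to (fun ω hω => Finset.mem_image_of_mem α hω) _

theorem pr_pos_of {Ω : Type} [Fintype Ω] (μ : Ω → ℝ) (h0 : ∀ ω, 0 ≤ μ ω) (E : Ω → Prop)
    (ω : Ω) (hE : E ω) (hω : 0 < μ ω) : 0 < pr μ E := by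
  unfold pr
  apply Finset.sum_pos'
  · intro i _
    split_ifs
    · exact h0 i
    · exact le_rfl
  · exact ⟨ω, Finset.mem_univ _, by simpa [hE] using hω⟩

theorem condMutualInfo_zero {Ω A B C : Type} [Fintype Ω] (μ : Ω → ℝ) (h0 : ∀ ω, 0 ≤ μ ω)
    (α : Ω → A) (β : Ω → B) (γ : Ω → C)
    (h : ∀ a b c, pr μ (fun ω => ((α ω, β ω), γ ω) = ((a, b), c)) * pr μ (fun ω => γ ω = c) =
      pr μ (fun ω => (α ω, γ ω) = (a, c)) * pr μ (fun ω => (β ω, γ ω) = (b, c))) :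
    condMutualInfo μ α β γ = 0 := by
  unfold condMutualInfo condEnt
  simp only [ent_eq_sum]
  have key : ∀ ω, μ ω * Real.logb 2 (pr μ (fun ω' => ((α ω', β ω'), γ ω') = ((α ω, β ω), γ ω)))
      + μ ω * Real.logb 2 (pr μ (fun ω' => γ ω' = γ ω))
      = μ ω * Real.logb 2 (pr μ (fun ω' => (α ω', γ ω') = (α ω, γ ω)))
      + μ ω * Real.logb 2 (pr μ (fun ω' => (β ω', γ ω') = (β ω, γ ω))) := by
    intro ω
    rcases (h0 ω).eq_or_lt with hz | hp
    · simp [← hz]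
    · rw [← mul_add, ← mul_add, ← Real.logb_mul, ← Real.logb_mul, h]
      all_goals
        apply ne_of_gt
        apply pr_pos_of μ h0 _ ω _ hp
        rfl
  have hs := Finset.sum_congr (rfl : (Finset.univ : Finset Ω) = Finset.univ) (fun ω _ => key ω)
  rw [Finset.sum_add_distrib, Finset.sum_add_distrib] at hs
  linarith

/-- Conditional law of `(a, b)` given `(s, t)`. -/
noncomputable def stepP (e : ℝ) (s t a b : Fin 2) : ℝ :=
  if s = t then (if a = s ∧ b = s then 1 else 0) else (if a = b then e / 2 else 1 / 2 - e / 2)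

/-- The joint law of `(a, b, s, t)`. -/
noncomputable def stepMu (e : ℝ) : Fin 2 × Fin 2 × Fin 2 × Fin 2 → ℝ :=
  fun ω => Dmat e ω.2.2.1 ω.2.2.2 * stepP e ω.2.2.1 ω.2.2.2 ω.1 ω.2.1

theorem stepMu_nonneg (e : ℝ) (h0 : 0 ≤ e) (h1 : e ≤ 1 / 2) (ω) : 0 ≤ stepMu e ω := by
  unfold stepMu Dmat stepP
  apply mul_nonneg <;> split_ifs <;> linarith

theorem stepMu_sum (e : ℝ) : ∑ ω, stepMu e ω = 1 := by
  simp [Fintype.sum_prod_type, Fin.sum_univ_two, stepMu, Dmat, stepP]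
  ring

theorem stepMu_st (e : ℝ) (s t : Fin 2) :
    pr (stepMu e) (fun ω => ω.2.2.1 = s ∧ ω.2.2.2 = t) = Dmat e s t := by
  fin_cases s <;> fin_cases t <;>
    simp [pr, Fintype.sum_prod_type, Fin.sum_univ_two, stepMu, Dmat, stepP] <;> ring

theorem stepMu_ab (e : ℝ) (s t : Fin 2) :
    pr (stepMu e) (fun ω => ω.1 = s ∧ ω.2.1 = t) = Dmat (e * (1 - e)) s t := by
  fin_cases s <;> fin_cases t <;>
    simp [pr, Fintype.sum_prod_type, Fin.sum_univ_two, stepMu, Dmat, stepP] <;> ring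

theorem stepMu_s (e : ℝ) (h0 : 0 ≤ e) (h1 : e ≤ 1 / 2) :
    condMutualInfo (stepMu e) (fun ω => ω.1) (fun ω => ω.2.1) (fun ω => ω.2.2.1) = 0 := by
  apply condMutualInfo_zero _ (stepMu_nonneg e h0 h1)
  intro a b c
  fin_cases a <;> fin_cases b <;> fin_cases c <;>
    simp [pr, Fintype.sum_prod_type, Fin.sum_univ_two, stepMu, Dmat, stepP] <;> ring

theorem stepMu_t (e : ℝ) (h0 : 0 ≤ e) (h1 : e ≤ 1 / 2) :
    condMutualInfo (stepMu e) (fun ω => ω.1) (fun ω => ω.2.1) (fun ω => ω.2.2.2) = 0 := by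
  apply condMutualInfo_zero _ (stepMu_nonneg e h0 h1)
  intro a b c
  fin_cases a <;> fin_cases b <;> fin_cases c <;>
    simp [pr, Fintype.sum_prod_type, Fin.sum_univ_two, stepMu, Dmat, stepP] <;> ring

/-- The sequence of error parameters. -/
noncomputable def eSeq : ℕ → ℝ
  | 0 => 1 / 4
  | k + 1 => eSeq k * (1 - eSeq k)

theorem eSeq_bounds (k : ℕ) : 0 < eSeq k ∧ eSeq k ≤ 1 / ((k : ℝ) + 4) := by
  induction k with
  | zero => norm_num [eSeq]
  | succ k ih =>
    obtain ⟨h0, h1⟩ := ih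
    have hk : (0 : ℝ) ≤ k := Nat.cast_nonneg k
    have h2 : eSeq k * ((k : ℝ) + 4) ≤ 1 := by rwa [le_div_iff₀ (by linarith)] at h1
    have h3 : eSeq k ≤ 1 / 4 := by nlinarith
    simp only [eSeq]
    push_cast
    refine ⟨mul_pos h0 (by linarith), ?_⟩
    rw [le_div_iff₀ (by linarith)]
    nlinarith [mul_nonneg h0.le (sub_nonneg.mpr h2), mul_nonneg h0.le hk,
      mul_nonneg (sub_nonneg.mpr h2) (sub_nonneg.mpr h3), sq_nonneg (eSeq k)]

theorem eSeq_le (k : ℕ) : eSeq k ≤ 1 / 2 := by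
  refine (eSeq_bounds k).2.trans ?_
  have hk : (0 : ℝ) ≤ k := Nat.cast_nonneg k
  rw [div_le_div_iff₀ (by linarith) (by norm_num)]
  linarith

theorem pr_split_right {Ω : Type} [Fintype Ω] (μ : Ω → ℝ) (E : Ω → Prop) (β : Ω → Fin 2) :
    pr μ E = pr μ (fun ω => E ω ∧ β ω = 0) + pr μ (fun ω => E ω ∧ β ω = 1) := by
  unfold pr
  rw [← Finset.sum_add_distrib]
  apply Finset.sum_congr rfl
  intro ω _
  have : β ω = 0 ∨ β ω = 1 := by omega
  rcases this with h | h <;> by_cases hE : E ω <;> simp [h, hE]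

theorem condIndep_eSeq (k : ℕ) : ∀ (Ω : Type) (iΩ : Fintype Ω) (μ : Ω → ℝ) (α β : Ω → Fin 2),
    (∀ a b, pr μ (fun ω => α ω = a ∧ β ω = b) = Dmat (eSeq k) a b) →
    CondIndepOrderAux k Ω (Fin 2) (Fin 2) iΩ μ α β := by
  induction k with
  | zero =>
    intro Ω iΩ μ α β h
    simp only [CondIndepOrderAux]
    intro a b
    rw [pr_split_right μ (fun ω => α ω = a) β, pr_split_right μ (fun ω => β ω = b) α]
    have hc : ∀ c, pr μ (fun ω => β ω = b ∧ α ω = c) = pr μ (fun ω => α ω = c ∧ β ω = b) := by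
      intro c
      congr 1
      funext ω
      exact propext and_comm
    rw [hc, hc, h, h, h, h, h]
    fin_cases a <;> fin_cases b <;> norm_num [Dmat, eSeq]
  | succ k ih =>
    intro Ω iΩ μ α β h
    have h0 := (eSeq_bounds k).1.le
    have h1 := eSeq_le k
    simp only [CondIndepOrderAux]
    refine ⟨Fin 2 × Fin 2 × Fin 2 × Fin 2, Fin 2, Fin 2, inferInstance, stepMu (eSeq k),
      fun ω => ω.1, fun ω => ω.2.1, fun ω => ω.2.2.1, fun ω => ω.2.2.2,
      ⟨stepMu_nonneg _ h0 h1, stepMu_sum _⟩, ?_, stepMu_s _ h0 h1, stepMu_t _ h0 h1, ?_⟩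
    · intro a b
      rw [h, stepMu_ab]
      rfl
    · exact ih _ _ _ _ _ (stepMu_st _)

/-- For every `δ > 0` there exists `ε` with `0 < ε < δ` such that
`D_ε` is a good joint probability matrix. -/
theorem exists_small_good_Dmat (δ : ℝ) (hδ : 0 < δ) :
    ∃ ε : ℝ, 0 < ε ∧ ε < δ ∧ IsGoodMatrix (Dmat ε) := by
  obtain ⟨k, hk⟩ := exists_nat_one_div_lt hδ
  have h0 := (eSeq_bounds k).1
  refine ⟨eSeq k, h0, ?_, ?_⟩
  · refine ((eSeq_bounds k).2.trans ?_).trans_lt hk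
    have hk : (0 : ℝ) ≤ k := Nat.cast_nonneg k
    exact one_div_le_one_div_of_le (by linarith) (by linarith)
  · exact ⟨_, inferInstance, stepMu (eSeq k), fun ω => ω.2.2.1, fun ω => ω.2.2.2, k,
      ⟨stepMu_nonneg _ h0.le (eSeq_le k), stepMu_sum _⟩, fun i j => (stepMu_st _ i j).symm,
      condIndep_eSeq k _ _ _ _ _ (stepMu_st _)⟩
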